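/- Let ψ be a unit vector in ℂ^{d₁} ⊗ ℂ^{d₂} ⊗ ℂ^{d₃}. Then V₁₂₃(ψ) = (√3/12)·(C_{1|23}(ψ)·C_{2|13}(ψ)·C_{3|12}(ψ))^{2/3} > 0 if and only if ψ is genuinely tripartite entangled, i.e. ψ cannot be written as a product u ⊗ v across any of the three bipartitions 1|23, 2|13, 3|12. -/

import Mathlib

open scoped BigOperators

/-- The reduced density matrix on the first factor of a bipartite pure state:
`ρ₁ i i' = ∑ j, ψ (i, j) * conj (ψ (i', j))`. -/
noncomputable def redMat {α β : Type*} [Fintype β] (ψ : α × β → ℂ) : Matrix α α ℂ :=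
  Matrix.of fun i i' => ∑ j, ψ (i, j) * (starRingEnd ℂ) (ψ (i', j))

/-- The concurrence `C(ψ) = √(2(1 − Tr(ρ₁²)))` of a bipartite pure state. -/
noncomputable def conc {α β : Type*} [Fintype α] [Fintype β] (ψ : α × β → ℂ) : ℝ :=
  Real.sqrt (2 * (1 - (Matrix.trace (redMat ψ * redMat ψ)).re))

section Tripartite

variable {d₁ d₂ d₃ : ℕ}

/-- Bipartition concurrence `C_{1|23}`. -/
noncomputable def T1 (ψ : Fin d₁ × Fin d₂ × Fin d₃ → ℂ) : ℝ :=
  conc fun p : Fin d₁ × (Fin d₂ × Fin d₃) => ψ (p.1, p.2)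

/-- Bipartition concurrence `C_{2|13}`. -/
noncomputable def T2 (ψ : Fin d₁ × Fin d₂ × Fin d₃ → ℂ) : ℝ :=
  conc fun p : Fin d₂ × (Fin d₁ × Fin d₃) => ψ (p.2.1, p.1, p.2.2)

/-- Bipartition concurrence `C_{3|12}`. -/
noncomputable def T3 (ψ : Fin d₁ × Fin d₂ × Fin d₃ → ℂ) : ℝ :=
  conc fun p : Fin d₃ × (Fin d₁ × Fin d₂) => ψ (p.2.1, p.2.2, p.1)

/-- The tripartite concurrence regular tetrahedron measure
`V₁₂₃(ψ) = (√3/12)·(C_{1|23}·C_{2|13}·C_{3|12})^{2/3}`. -/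
noncomputable def V123 (ψ : Fin d₁ × Fin d₂ × Fin d₃ → ℂ) : ℝ :=
  (Real.sqrt 3 / 12) * (T1 ψ * T2 ψ * T3 ψ) ^ ((2 : ℝ) / 3)

end Tripartite

/-!
For a unit vector `ψ`, the squared concurrence is the sum of the squared moduli of all `2 × 2`
minors of the coefficient matrix of `ψ` (Lagrange's identity). It therefore vanishes exactly when
that matrix has rank at most one, that is, when `ψ` is a product vector. Since `V₁₂₃` is a positive
multiple of a positive power of the product of three nonnegative concurrences, it is positive
exactly when `ψ` is not a product across any of the three bipartitions.
-/

section ProductVectors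

variable {α β ι R K : Type*}

/-- A vector in the tensor product of two coordinate spaces, with coordinates indexed by `α × β`,
is a product vector when it is a pure tensor `u ⊗ v`. -/
def IsProductVector [Mul R] (ψ : α × β → R) : Prop :=
  ∃ (u : α → R) (v : β → R), ∀ x, ψ x = u x.1 * v x.2

theorem isProductVector_comp_equiv_iff [Mul R] (e : α × β ≃ ι) (ψ : ι → R) :
    IsProductVector (ψ ∘ e) ↔
      ∃ (u : α → R) (v : β → R), ∀ x, ψ x = u (e.symm x).1 * v (e.symm x).2 := by
  simp only [IsProductVector, ← e.forall_congr_right, Function.comp_apply, e.symm_apply_apply]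

theorem isProductVector_iff_mul_eq_mul [CommGroupWithZero K] (ψ : α × β → K) :
    IsProductVector ψ ↔ ∀ p q : α × β, ψ p * ψ q = ψ (p.1, q.2) * ψ (q.1, p.2) := by
  constructor
  · rintro ⟨u, v, huv⟩ p q
    simp only [huv]
    rw [mul_mul_mul_comm, mul_comm (v p.2), mul_mul_mul_comm]
  · intro hminors
    by_cases hzero : ∀ p, ψ p = 0
    · exact ⟨0, 0, by simpa using hzero⟩
    · obtain ⟨⟨a, b⟩, hab⟩ := not_forall.mp hzero
      refine ⟨fun i => ψ (i, b), fun j => ψ (a, j) / ψ (a, b), fun p => ?_⟩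
      rw [← mul_div_assoc, eq_div_iff hab, hminors p (a, b)]

/-- The `2 × 2` minor of `ψ`, viewed as a matrix with rows `α` and columns `β`, whose submatrix has
diagonal entries at `p` and `q`. These minors measure how far `ψ` is from being a product vector. -/
def bipartiteMinor [Mul R] [Sub R] (ψ : α × β → R) (p q : α × β) : R :=
  ψ p * ψ q - ψ (p.1, q.2) * ψ (q.1, p.2)

theorem isProductVector_iff_bipartiteMinor_eq_zero [Field K] (ψ : α × β → K) :
    IsProductVector ψ ↔ ∀ p q, bipartiteMinor ψ p q = 0 := by
  simp only [isProductVector_iff_mul_eq_mul, bipartiteMinor, sub_eq_zero]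

end ProductVectors

theorem sum_sum_exchange_snd {α β M : Type*} [Fintype α] [Fintype β] [AddCommMonoid M]
    (f : α × β → α × β → M) :
    ∑ p : α × β, ∑ q : α × β, f (p.1, q.2) (q.1, p.2) = ∑ p, ∑ q, f p q := by
  simp only [Fintype.sum_prod_type]
  refine Finset.sum_congr rfl fun a _ => ?_
  calc ∑ b, ∑ a', ∑ b', f (a, b') (a', b)
      = ∑ a', ∑ b, ∑ b', f (a, b') (a', b) := Finset.sum_comm
    _ = ∑ a', ∑ b, ∑ b', f (a, b) (a', b') := Finset.sum_congr rfl fun _ _ => Finset.sum_comm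
    _ = ∑ b, ∑ a', ∑ b', f (a, b) (a', b') := Finset.sum_comm

section Concurrence

variable {α β ι : Type*} [Fintype α] [Fintype β]

theorem trace_redMat_mul_self (ψ : α × β → ℂ) :
    (redMat ψ * redMat ψ).trace =
      ∑ p, ∑ q, ψ p * ψ q * (starRingEnd ℂ) (ψ (p.1, q.2) * ψ (q.1, p.2)) := by
  simp only [Matrix.trace, Matrix.diag, Matrix.mul_apply, redMat, Matrix.of_apply,
    Finset.sum_mul_sum, Fintype.sum_prod_type]
  refine Finset.sum_congr rfl fun i _ => ?_
  rw [Finset.sum_comm]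
  refine Finset.sum_congr rfl fun j _ => Finset.sum_congr rfl fun i' _ =>
    Finset.sum_congr rfl fun j' _ => ?_
  rw [map_mul]
  ring

theorem sum_normSq_bipartiteMinor_eq (ψ : α × β → ℂ) :
    ∑ p, ∑ q, Complex.normSq (bipartiteMinor ψ p q) =
      2 * ((∑ p, Complex.normSq (ψ p)) ^ 2 - (redMat ψ * redMat ψ).trace.re) := by
  have sum_normSq_mul : ∑ p, ∑ q, Complex.normSq (ψ p * ψ q) =
      (∑ p, Complex.normSq (ψ p)) ^ 2 := by
    simp only [Complex.normSq_mul, sq, Finset.sum_mul_sum]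
  have sum_normSq_mul_exchange : ∑ p : α × β, ∑ q : α × β,
      Complex.normSq (ψ (p.1, q.2) * ψ (q.1, p.2)) = (∑ p, Complex.normSq (ψ p)) ^ 2 :=
    (sum_sum_exchange_snd fun p q => Complex.normSq (ψ p * ψ q)).trans sum_normSq_mul
  simp only [bipartiteMinor, Complex.normSq_sub, Finset.sum_sub_distrib, Finset.sum_add_distrib,
    sum_normSq_mul, sum_normSq_mul_exchange, trace_redMat_mul_self, Complex.re_sum,
    ← Finset.mul_sum]
  ring

theorem conc_eq_sqrt_sum_normSq_bipartiteMinor {ψ : α × β → ℂ}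
    (hψ : ∑ p, Complex.normSq (ψ p) = 1) :
    conc ψ = √(∑ p, ∑ q, Complex.normSq (bipartiteMinor ψ p q)) := by
  rw [conc, sum_normSq_bipartiteMinor_eq, hψ, one_pow]

theorem conc_nonneg (ψ : α × β → ℂ) : 0 ≤ conc ψ :=
  Real.sqrt_nonneg _

theorem conc_eq_zero_iff {ψ : α × β → ℂ} (hψ : ∑ p, Complex.normSq (ψ p) = 1) :
    conc ψ = 0 ↔ IsProductVector ψ := by
  have normSq_nonneg (x : (α × β) × (α × β)) : 0 ≤ Complex.normSq (bipartiteMinor ψ x.1 x.2) :=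
    Complex.normSq_nonneg _
  rw [conc_eq_sqrt_sum_normSq_bipartiteMinor hψ, ← Fintype.sum_prod_type',
    Real.sqrt_eq_zero (Finset.sum_nonneg fun x _ => normSq_nonneg x),
    Fintype.sum_eq_zero_iff_of_nonneg normSq_nonneg,
    isProductVector_iff_bipartiteMinor_eq_zero]
  simp only [funext_iff, Prod.forall (α := α × β), Pi.zero_apply, Complex.normSq_eq_zero]

theorem conc_pos_iff {ψ : α × β → ℂ} (hψ : ∑ p, Complex.normSq (ψ p) = 1) :
    0 < conc ψ ↔ ¬ IsProductVector ψ := by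
  rw [(conc_nonneg ψ).lt_iff_ne', ne_eq, conc_eq_zero_iff hψ]

theorem conc_comp_equiv_pos_iff [Fintype ι] (e : α × β ≃ ι) {ψ : ι → ℂ}
    (hψ : ∑ x, Complex.normSq (ψ x) = 1) :
    0 < conc (ψ ∘ e) ↔
      ¬ ∃ (u : α → ℂ) (v : β → ℂ), ∀ x, ψ x = u (e.symm x).1 * v (e.symm x).2 := by
  rw [← isProductVector_comp_equiv_iff]
  exact conc_pos_iff ((e.sum_comp fun x => Complex.normSq (ψ x)).trans hψ)

end Concurrence

theorem V123_pos_iff {d₁ d₂ d₃ : ℕ} (ψ : Fin d₁ × Fin d₂ × Fin d₃ → ℂ) :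
    0 < V123 ψ ↔ 0 < T1 ψ ∧ 0 < T2 ψ ∧ 0 < T3 ψ := by
  have h₁ : 0 ≤ T1 ψ := conc_nonneg _
  have h₂ : 0 ≤ T2 ψ := conc_nonneg _
  have h₃ : 0 ≤ T3 ψ := conc_nonneg _
  constructor
  · intro hV
    have hne : T1 ψ * T2 ψ * T3 ψ ≠ 0 := by
      intro hzero
      simp [V123, hzero] at hV
    simpa [h₁.lt_iff_ne', h₂.lt_iff_ne', h₃.lt_iff_ne', and_assoc] using hne
  · rintro ⟨hpos₁, hpos₂, hpos₃⟩
    unfold V123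
    positivity

/-- The bipartition `2|13` of the index set `α × β × γ`, presented as an equivalence from pairs
consisting of the middle coordinate and the two outer ones. -/
def prodLeftComm (α β γ : Type*) : β × α × γ ≃ α × β × γ :=
  (Equiv.prodAssoc β α γ).symm.trans <|
    ((Equiv.prodComm β α).prodCongr (Equiv.refl γ)).trans (Equiv.prodAssoc α β γ)

/-- `V₁₂₃(ψ) > 0` iff `ψ` is genuinely tripartite entangled, i.e. `ψ` is not a product
across any of the three bipartitions `1|23, 2|13, 3|12`. -/
theorem V123_pos_iff_GME {d₁ d₂ d₃ : ℕ}
    (ψ : Fin d₁ × Fin d₂ × Fin d₃ → ℂ)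
    (hψ : ∑ x : Fin d₁ × Fin d₂ × Fin d₃, Complex.normSq (ψ x) = 1) :
    0 < V123 ψ ↔
      (¬ ∃ (u : Fin d₁ → ℂ) (v : Fin d₂ × Fin d₃ → ℂ),
          ∀ x : Fin d₁ × Fin d₂ × Fin d₃, ψ x = u x.1 * v x.2) ∧
      (¬ ∃ (u : Fin d₂ → ℂ) (v : Fin d₁ × Fin d₃ → ℂ),
          ∀ x : Fin d₁ × Fin d₂ × Fin d₃, ψ x = u x.2.1 * v (x.1, x.2.2)) ∧
      (¬ ∃ (u : Fin d₃ → ℂ) (v : Fin d₁ × Fin d₂ → ℂ),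
          ∀ x : Fin d₁ × Fin d₂ × Fin d₃, ψ x = u x.2.2 * v (x.1, x.2.1)) := by
  rw [V123_pos_iff]
  -- Each bipartition concurrence is definitionally `conc (ψ ∘ e)` for the equivalence `e` below.
  exact and_congr (conc_comp_equiv_pos_iff (Equiv.refl _) hψ) <|
    and_congr (conc_comp_equiv_pos_iff (prodLeftComm (Fin d₁) (Fin d₂) (Fin d₃)) hψ)
      (conc_comp_equiv_pos_iff ((Equiv.prodComm _ _).trans (Equiv.prodAssoc _ _ _)) hψ)
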